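/- arXiv:2204.01980 — 2 statements merged into one kernel-verified Lean document; each statement's English description precedes it below -/
import Mathlib

section
/- Let H = 3 000 175 332 800, let ν₃(t) = 1/(57.54 · (log t)^{2/3} · (log log t)^{1/3}), and let x ≥ exp(2.8·10^{10}). Then for all real t ≥ H, log(t · x^{ν₃(t)}) ≥ 0.18525 · (log x)^{3/5} / (log log x)^{1/5}; moreover there exists a real t ≥ H with log(t · x^{ν₃(t)}) ≤ 0.20680 · (log x)^{3/5} / (log log x)^{1/5}. In particular, 0.18525 · (log x)^{3/5}/(log log x)^{1/5} ≤ log(min_{t ≥ H} t·x^{ν₃(t)}) ≤ 0.20680 · (log x)^{3/5}/(log log x)^{1/5}. -/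
/-- The Vinogradov–Korobov zero-free region width `ν₃(t)`. -/
noncomputable def nu3 (t : ℝ) : ℝ :=
  1 / (57.54 * Real.log t ^ ((2:ℝ)/3) * Real.log (Real.log t) ^ ((1:ℝ)/3))

lemma nu3_aux_rpow (L : ℝ) (hL : 0 ≤ L) (n k : ℕ) (q : ℝ) (hq : q = (n:ℝ) / k) :
    L ^ q = (L ^ ((1:ℝ) / k)) ^ n := by
  rw [← Real.rpow_natCast, ← Real.rpow_mul hL, hq]
  congr 1
  ring

lemma nu3_log_eq (x t : ℝ) (ht : 0 < t) :
    Real.log (t * Real.exp (nu3 t * Real.log x)) = Real.log t + nu3 t * Real.log x := by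
  rw [Real.log_mul ht.ne' (Real.exp_pos _).ne', Real.log_exp]

/-- cube-root form of `nu3` -/
lemma nu3_form (t : ℝ) (h1 : 1 < Real.log t) :
    ∃ y m : ℝ, 0 < y ∧ 0 < m ∧ y ^ 3 = Real.log t ∧ m ^ 3 = Real.log (Real.log t) ∧
      nu3 t = 1 / (57.54 * y ^ 2 * m) := by
  have h0 : 0 < Real.log t := by linarith
  have h2 : 0 < Real.log (Real.log t) := Real.log_pos h1
  refine ⟨Real.log t ^ ((1:ℝ)/(3:ℕ)), Real.log (Real.log t) ^ ((1:ℝ)/(3:ℕ)),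
    by positivity, by positivity, ?_, ?_, ?_⟩
  · rw [← nu3_aux_rpow _ h0.le 3 3 1 (by norm_num), Real.rpow_one]
  · rw [← nu3_aux_rpow _ h2.le 3 3 1 (by norm_num), Real.rpow_one]
  · rw [← nu3_aux_rpow _ h0.le 2 3 ((2:ℝ)/3) (by norm_num)]
    unfold nu3
    norm_num

lemma nu3_R_form (X : ℝ) (hX : 1 < X) (hL : 0 < Real.log X) :
    ∃ s l : ℝ, 0 < s ∧ 0 < l ∧ l ^ 3 = Real.log X ∧ X = s ^ 5 * l ∧
      (∀ c : ℝ, c * X ^ ((3:ℝ)/5) / Real.log X ^ ((1:ℝ)/5) = c * s ^ 3) ∧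
      Real.log (s ^ 3) = 3 / 5 * Real.log X - 1 / 5 * Real.log (Real.log X) := by
  have hX0 : 0 < X := by linarith
  set L := Real.log X with hLdef
  have e1 : X ^ ((3:ℝ)/5) = (X ^ ((1:ℝ)/(5:ℕ))) ^ 3 := nu3_aux_rpow X hX0.le 3 5 _ (by norm_num)
  have e2 : L ^ ((1:ℝ)/5) = (L ^ ((1:ℝ)/(15:ℕ))) ^ 3 := nu3_aux_rpow L hL.le 3 15 _ (by norm_num)
  have e3 : X ^ (1:ℝ) = (X ^ ((1:ℝ)/(5:ℕ))) ^ 5 := nu3_aux_rpow X hX0.le 5 5 _ (by norm_num)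
  have e4 : L ^ (1:ℝ) = (L ^ ((1:ℝ)/(15:ℕ))) ^ 15 := nu3_aux_rpow L hL.le 15 15 _ (by norm_num)
  rw [Real.rpow_one] at e3 e4
  have ha : 0 < X ^ ((1:ℝ)/(5:ℕ)) := by positivity
  have hb : 0 < L ^ ((1:ℝ)/(15:ℕ)) := by positivity
  have la : Real.log (X ^ ((1:ℝ)/(5:ℕ))) = 1 / 5 * L := by
    rw [Real.log_rpow hX0]; norm_num [hLdef]
  have lb : Real.log (L ^ ((1:ℝ)/(15:ℕ))) = 1 / 15 * Real.log L := by
    rw [Real.log_rpow hL]; norm_num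
  rw [e1, e2]
  generalize X ^ ((1:ℝ)/(5:ℕ)) = a at *
  generalize L ^ ((1:ℝ)/(15:ℕ)) = b at *
  refine ⟨a / b, b ^ 5, by positivity, by positivity, by rw [e4]; ring, ?_, ?_, ?_⟩
  · rw [e3]; field_simp
  · intro c; field_simp
  · rw [Real.log_pow, Real.log_div ha.ne' hb.ne', la, lb]; push_cast; ring

lemma nu3_poly (y s : ℝ) (hy : 0 < y) (hs : 0 < s) :
    0.18525 * s ^ 3 * y ^ 2 ≤ y ^ 5 + 0.01963 * s ^ 5 := by
  have h : 0 ≤ (y - 0.4201 * s) ^ 2 * (2 * y ^ 3 + 4 * (0.4201 * s) * y ^ 2 +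
    6 * (0.4201 * s) ^ 2 * y + 3 * (0.4201 * s) ^ 3) := by positivity
  have h1 : 0 < s ^ 3 * y ^ 2 := by positivity
  have h2 : 0 < s ^ 5 := by positivity
  nlinarith

theorem T_bounds_nu3 (x : ℝ) (hx : Real.exp (2.8e10) ≤ x) :
    (∀ t : ℝ, (3000175332800 : ℝ) ≤ t →
      0.18525 * Real.log x ^ ((3:ℝ)/5) / Real.log (Real.log x) ^ ((1:ℝ)/5) ≤
        Real.log (t * Real.exp (nu3 t * Real.log x))) ∧
    (∃ t : ℝ, (3000175332800 : ℝ) ≤ t ∧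
      Real.log (t * Real.exp (nu3 t * Real.log x)) ≤
        0.20680 * Real.log x ^ ((3:ℝ)/5) / Real.log (Real.log x) ^ ((1:ℝ)/5)) := by
  have hx0 : 0 < x := lt_of_lt_of_le (Real.exp_pos _) hx
  have hX : (2.8e10 : ℝ) ≤ Real.log x := (Real.le_log_iff_exp_le hx0).2 hx
  have hX1 : 1 < Real.log x := by norm_num at hX ⊢; linarith
  have hlog2 := Real.log_two_gt_d9
  have hlog2' := Real.log_two_lt_d9
  have hL : 34 * Real.log 2 ≤ Real.log (Real.log x) := by
    have : Real.log ((2:ℝ) ^ 34) ≤ Real.log (Real.log x) := by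
      apply Real.log_le_log (by norm_num)
      norm_num at hX ⊢; linarith
    rwa [Real.log_pow] at this
  have hL0 : 0 < Real.log (Real.log x) := by linarith
  obtain ⟨s, l, hs, hl, hl3, hXe, hR, hls⟩ := nu3_R_form (Real.log x) hX1 hL0
  rw [hR, hR]
  set L := Real.log (Real.log x) with hLd
  have hLL0 : 0 < Real.log L := Real.log_pos (by linarith)
  constructor
  · intro t ht
    have ht0 : 0 < t := by linarith
    have h1 : 1 < Real.log t := by
      rw [Real.lt_log_iff_exp_lt ht0]
      have := Real.exp_one_lt_d9
      linarith
    rw [nu3_log_eq x t ht0]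
    obtain ⟨y, m, hy, hm, hy3, hm3, hnu⟩ := nu3_form t h1
    rw [hnu]
    by_cases hc : 0.18525 * s ^ 3 ≤ Real.log t
    · have : 0 ≤ 1 / (57.54 * y ^ 2 * m) * Real.log x := by positivity
      linarith
    · push Not at hc
      have hs3 : 0 < s ^ 3 := by positivity
      have hll : Real.log (Real.log t) ≤ Real.log (s ^ 3) :=
        Real.log_le_log (by linarith) (by linarith)
      have hml : m ^ 3 ≤ 3 / 5 * l ^ 3 := by
        rw [hm3, hl3]; linarith
      have hml' : 1.185 * m ≤ l := by
        apply le_of_pow_le_pow_left₀ (n := 3) (by norm_num) hl.le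
        have : 0 < m ^ 3 := by positivity
        nlinarith
      rw [← hy3, hXe]
      have hp := nu3_poly y s hy hs
      have hk : 0.01963 * s ^ 5 / y ^ 2 ≤ 1 / (57.54 * y ^ 2 * m) * (s ^ 5 * l) := by
        have : 1 / (57.54 * y ^ 2 * m) * (s ^ 5 * l) = (l / m / 57.54) * s ^ 5 / y ^ 2 := by
          field_simp
        rw [this]
        have : 1.185 ≤ l / m := by rwa [le_div_iff₀ hm]
        gcongr
        rw [le_div_iff₀ (by norm_num)]
        linarith
      have : 0.18525 * s ^ 3 ≤ y ^ 3 + 0.01963 * s ^ 5 / y ^ 2 := by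
        have e : y ^ 3 + 0.01963 * s ^ 5 / y ^ 2 = (y ^ 5 + 0.01963 * s ^ 5) / y ^ 2 := by
          field_simp
        rw [e, le_div_iff₀ (by positivity)]
        exact hp
      linarith
  · have hu0 : 0 < 0.064 * s ^ 3 := by positivity
    have hlogL : Real.log L ≤ 5 * Real.log 2 + L / 32 - 1 := by
      have h := Real.log_le_sub_one_of_pos (show 0 < L / 2 ^ 5 by positivity)
      rw [Real.log_div hL0.ne' (by norm_num), Real.log_pow] at h
      push_cast at h
      norm_num at h
      linarith
    have hc : -(4 * Real.log 2) ≤ Real.log 0.064 := by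
      have : Real.log (((2:ℝ) ^ 4)⁻¹) ≤ Real.log 0.064 :=
        Real.log_le_log (by norm_num) (by norm_num)
      rwa [Real.log_inv, Real.log_pow] at this
    have hlu : 0.45 * L ≤ Real.log (0.064 * s ^ 3) := by
      rw [Real.log_mul (by norm_num) (by positivity), hls]
      linarith
    have hu : (1024 : ℝ) ≤ 0.064 * s ^ 3 := by
      have : Real.log ((2:ℝ) ^ 10) ≤ Real.log (0.064 * s ^ 3) := by
        rw [Real.log_pow]; push_cast; linarith
      have := (Real.log_le_log_iff (by norm_num) hu0).1 this
      linarith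
    refine ⟨Real.exp (0.064 * s ^ 3), ?_, ?_⟩
    · rw [← Real.log_le_iff_le_exp (by norm_num)]
      have : Real.log 3000175332800 ≤ Real.log ((2:ℝ) ^ 42) :=
        Real.log_le_log (by norm_num) (by norm_num)
      rw [Real.log_pow] at this
      push_cast at this
      linarith
    · rw [nu3_log_eq x _ (Real.exp_pos _)]
      obtain ⟨y, m, hy, hm, hy3, hm3, hnu⟩ := nu3_form (Real.exp (0.064 * s ^ 3))
        (by rw [Real.log_exp]; linarith)
      rw [hnu]
      rw [Real.log_exp] at hy3 hm3 ⊢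
      have hys : y = 0.4 * s := by
        apply (pow_left_inj₀ hy.le (by positivity) (n := 3) (by norm_num)).1
        rw [hy3]; ring
      have hml : l ≤ 1.31 * m := by
        apply le_of_pow_le_pow_left₀ (n := 3) (by norm_num) (by positivity)
        rw [mul_pow, hm3, hl3]
        linarith
      rw [hXe, hys]
      have e : 1 / (57.54 * (0.4 * s) ^ 2 * m) * (s ^ 5 * l) = (l / m / 57.54 / 0.16) * s ^ 3 := by
        field_simp
        norm_num
      have : l / m ≤ 1.31 := by rwa [div_le_iff₀ hm]
      have : (l / m / 57.54 / 0.16) * s ^ 3 ≤ 0.1428 * s ^ 3 := by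
        gcongr
        rw [div_le_iff₀ (by norm_num), div_le_iff₀ (by norm_num)]
        linarith
      rw [e]
      linarith
end

section
/- Let H = 3 000 175 332 800, let ν₃(t) = 1/(57.54 · (log t)^{2/3} · (log log t)^{1/3}), and let x ≥ exp(2.8·10^{10}). Then there exists a real t₀ ≥ H such that the function t ↦ x^{−ν₃(t)}/t is monotone increasing on [H, t₀] and monotone decreasing on [t₀, ∞), and t₀ satisfies B₀ · (log x)^{3/5}/(log log x)^{1/5} ≤ log t₀ ≤ B₁ · (log x)^{3/5}/(log log x)^{1/5}, where B₀ = (2/(3·57.54))^{3/5} · (5/3)^{1/5} and B₁ = 0.08228. -/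
open Real in
noncomputable def auxE (l w : ℝ) : ℝ :=
  log (1 / (3 * 57.54)) + l - 5 / 3 * w - 4 / 3 * log w + log (2 * w + 1)

open Real in
noncomputable def auxPhi (l w : ℝ) : ℝ :=
  -(1 / 57.54 * exp (l - 2 / 3 * w - 1 / 3 * log w)) - exp w

open Real in
theorem auxE_anti (l : ℝ) {a b : ℝ} (ha : 0 < a) (hab : a ≤ b) : auxE l b ≤ auxE l a := by
  unfold auxE
  have hb : 0 < b := ha.trans_le hab
  have h1 : log a ≤ log b := log_le_log ha hab
  have h2 : log (2 * b + 1) + log a ≤ log (2 * a + 1) + log b := by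
    rw [← log_mul (by positivity) (by positivity), ← log_mul (by positivity) (by positivity)]
    apply log_le_log (by positivity)
    nlinarith
  linarith

open Real in
theorem auxPhi_deriv (l w : ℝ) (hw : 0 < w) :
    HasDerivAt (auxPhi l) (exp w * (exp (auxE l w) - 1)) w := by
  have h1 : HasDerivAt (fun w => l - 2 / 3 * w - 1 / 3 * log w)
      (0 - 2 / 3 * 1 - 1 / 3 * w⁻¹) w :=
    (((hasDerivAt_const w l).sub ((hasDerivAt_id w).const_mul (2 / 3))).sub
      ((hasDerivAt_log hw.ne').const_mul (1 / 3)))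
  have h2 := ((h1.exp.const_mul (1 / 57.54)).neg).sub (Real.hasDerivAt_exp w)
  refine h2.congr_deriv ?_
  have h3 : auxE l w = log (1 / (3 * 57.54)) + (l - 2 / 3 * w - 1 / 3 * log w)
      - w - log w + log (2 * w + 1) := by unfold auxE; ring
  rw [h3]
  generalize l - 2 / 3 * w - 1 / 3 * log w = r
  rw [exp_add, exp_sub, exp_sub, exp_add, exp_log (by norm_num), exp_log hw,
    exp_log (by positivity)]
  have := exp_pos w
  field_simp
  ring

open Real in
theorem auxPhi_mono (l w0 : ℝ) (h : auxE l w0 = 0) :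
    MonotoneOn (auxPhi l) (Set.Ioc 0 w0) := by
  have hd : ∀ w ∈ Set.Ioc 0 w0, HasDerivAt (auxPhi l) (exp w * (exp (auxE l w) - 1)) w :=
    fun w hw => auxPhi_deriv l w hw.1
  apply monotoneOn_of_deriv_nonneg (convex_Ioc _ _)
  · exact fun w hw => (hd w hw).continuousAt.continuousWithinAt
  · exact fun w hw => (hd w (interior_subset hw)).differentiableAt.differentiableWithinAt
  · intro w hw
    have hw := interior_subset hw
    rw [(hd w hw).deriv]
    have := auxE_anti l hw.1 hw.2
    have : 1 ≤ exp (auxE l w) := one_le_exp (by linarith)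
    have := exp_pos w
    nlinarith

open Real in
theorem auxPhi_anti (l w0 : ℝ) (h0 : 0 < w0) (h : auxE l w0 = 0) :
    AntitoneOn (auxPhi l) (Set.Ici w0) := by
  have hd : ∀ w ∈ Set.Ici w0, HasDerivAt (auxPhi l) (exp w * (exp (auxE l w) - 1)) w :=
    fun w hw => auxPhi_deriv l w (h0.trans_le hw)
  apply antitoneOn_of_deriv_nonpos (convex_Ici _)
  · exact fun w hw => (hd w hw).continuousAt.continuousWithinAt
  · exact fun w hw => (hd w (interior_subset hw)).differentiableAt.differentiableWithinAt
  · intro w hw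
    have hw := interior_subset hw
    rw [(hd w hw).deriv]
    have := auxE_anti l h0 hw
    have : exp (auxE l w) ≤ 1 := exp_le_one_iff.2 (by linarith)
    have := exp_pos w
    nlinarith

open Real in
theorem fun_eq (x t : ℝ) (hx : 0 < log x) (htp : 0 < t) (ht : 1 < log t) :
    exp (-(nu3 t) * log x) / t = exp (auxPhi (log (log x)) (log (log t))) := by
  have ht0 : 0 < log t := by linarith
  have hw : 0 < log (log t) := log_pos ht
  unfold auxPhi nu3
  rw [exp_sub, exp_log ht0, exp_log htp, exp_sub, exp_sub, exp_log hx]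
  rw [rpow_def_of_pos ht0, rpow_def_of_pos hw, mul_comm (log (log t)) (2/3),
    mul_comm (log (log (log t))) (1/3)]
  congr 2
  field_simp

open Real in
theorem num_l : (24.055 : ℝ) ≤ log 2.8e10 := by
  rw [le_log_iff_exp_le (by norm_num)]
  have h1 : exp (24.055 : ℝ) = exp 1 ^ 24 * (exp (-0.0055) ^ 10)⁻¹ := by
    rw [← exp_nat_mul, ← exp_nat_mul, ← exp_neg, ← exp_add]; norm_num
  have h2 : exp 1 ^ 24 ≤ (2.7182818286 : ℝ) ^ 24 := by
    gcongr; exact exp_one_lt_d9.le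
  have h3 : (0.9945 : ℝ) ^ 10 ≤ exp (-0.0055) ^ 10 := by
    gcongr
    have := add_one_le_exp (-0.0055 : ℝ)
    norm_num at this ⊢; linarith
  have h4 : (exp (-0.0055) ^ 10)⁻¹ ≤ ((0.9945 : ℝ) ^ 10)⁻¹ := by
    apply inv_anti₀ (by positivity) h3
  rw [h1]
  calc _ ≤ (2.7182818286 : ℝ) ^ 24 * ((0.9945 : ℝ) ^ 10)⁻¹ := by gcongr
    _ ≤ _ := by norm_num

open Real in
theorem num_24 : log 24 ≤ 3.1785 := by
  rw [log_le_iff_le_exp (by norm_num)]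
  have h1 : exp (3.1785 : ℝ) = exp 1 ^ 3 * (exp 0.001785 ^ 100) := by
    rw [← exp_nat_mul, ← exp_nat_mul, ← exp_add]; norm_num
  have h2 : (2.7182818283 : ℝ) ^ 3 ≤ exp 1 ^ 3 := by
    gcongr; exact exp_one_gt_d9.le
  have h3 : (1.001785 : ℝ) ^ 100 ≤ exp 0.001785 ^ 100 := by
    gcongr
    have := add_one_le_exp (0.001785 : ℝ)
    norm_num at this ⊢; linarith
  rw [h1]
  calc (24 : ℝ) ≤ (2.7182818283 : ℝ) ^ 3 * (1.001785 : ℝ) ^ 100 := by norm_num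
    _ ≤ _ := by gcongr

open Real in
theorem num_B : (-2.4977 : ℝ) ≤ log 0.08228 := by
  have h : -4.9954 ≤ log (0.08228 ^ 2 : ℝ) := by
    rw [le_log_iff_exp_le (by norm_num)]
    have h1 : exp (-4.9954 : ℝ) = (exp 1 ^ 5 * exp (-0.0046))⁻¹ := by
      rw [← exp_nat_mul, ← exp_add, ← exp_neg]; norm_num
    have h2 : (2.7182818283 : ℝ) ^ 5 ≤ exp 1 ^ 5 := by
      gcongr; exact exp_one_gt_d9.le
    have h3 : (0.9954 : ℝ) ≤ exp (-0.0046) := by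
      have := add_one_le_exp (-0.0046 : ℝ)
      norm_num at this ⊢; linarith
    rw [h1]
    calc _ ≤ ((2.7182818283 : ℝ) ^ 5 * 0.9954)⁻¹ := by
          apply inv_anti₀ (by norm_num); gcongr
      _ ≤ _ := by norm_num
  rw [log_pow] at h
  push_cast at h
  linarith

open Real in
theorem upper_E (l : ℝ) (hl : 24.055 ≤ l) :
    auxE l (log 0.08228 + 3 / 5 * l - 1 / 5 * log l) ≤ 0 := by
  have hl0 : 0 < l := by linarith
  obtain ⟨w, hw⟩ : ∃ w, w = log 0.08228 + 3 / 5 * l - 1 / 5 * log l := ⟨_, rfl⟩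
  rw [← hw]
  have h24 : log l ≤ 3.1785 + (l / 24 - 1) := by
    have h := log_le_sub_one_of_pos (show 0 < l / 24 by positivity)
    rw [log_div hl0.ne' (by norm_num)] at h
    linarith [num_24]
  have hB := num_B
  have hwl : (3 / 5 - 1 / 120) * l - 2.9334 ≤ w := by linarith
  have hw0 : 11.299 ≤ w := by norm_num at *; linarith
  have hwp : 0 < w := by linarith
  have key : ((1 / (3 * 57.54)) ^ 3 * (2 * w + 1) ^ 3) * l ≤ 0.08228 ^ 5 * w ^ 4 := by
    have hl2 : l ≤ (w + 2.9334) * (120 / 71) := by linarith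
    calc _ ≤ ((1 / (3 * 57.54)) ^ 3 * (2 * w + 1) ^ 3) * ((w + 2.9334) * (120 / 71)) := by gcongr
      _ ≤ _ := by
        obtain ⟨s, hs⟩ : ∃ s, s = w - 11.299 := ⟨_, rfl⟩
        have hs0 : 0 ≤ s := by linarith
        have : w = s + 11.299 := by linarith
        subst this
        rw [← sub_nonneg]
        ring_nf
        positivity
  have h := log_le_log (by positivity) key
  rw [log_mul (by positivity) (by positivity), log_mul (by positivity) (by positivity),
    log_mul (by positivity) (by positivity), log_pow, log_pow, log_pow, log_pow] at h
  unfold auxE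
  push_cast at h
  linarith

open Real in
theorem lower_E (l w : ℝ) (hl : 24.055 ≤ l) (hwp : 0 < w)
    (hw : w = (3 / 5 * log (2 / (3 * 57.54)) + 1 / 5 * log (5 / 3)) + 3 / 5 * l - 1 / 5 * log l) :
    0 ≤ auxE l w := by
  have hl0 : 0 < l := by linarith
  have hll : 0 ≤ log l := log_nonneg (by linarith)
  have hc : log (2 / (3 * 57.54)) = log 2 + log (1 / (3 * 57.54)) := by
    rw [← log_mul (by norm_num) (by norm_num)]; norm_num
  have hcc : 3 * log (2 / (3 * 57.54)) + log (5 / 3) ≤ 0 := by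
    have : log ((2 / (3 * 57.54)) ^ 3 * (5 / 3)) ≤ 0 := log_nonpos (by norm_num) (by norm_num)
    rw [log_mul (by norm_num) (by norm_num), log_pow] at this
    exact_mod_cast this
  have h1 : log (5 / 3 * w) ≤ log l := log_le_log (by positivity) (by linarith)
  rw [log_mul (by norm_num) hwp.ne'] at h1
  have h2 : log (2 * w) ≤ log (2 * w + 1) := log_le_log (by positivity) (by linarith)
  rw [log_mul (by norm_num) hwp.ne'] at h2
  unfold auxE
  linarith

open Real in
theorem t0_bounds_nu3 (x : ℝ) (hx : Real.exp (2.8e10) ≤ x) :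
    ∃ t₀ : ℝ, (3000175332800 : ℝ) ≤ t₀ ∧
      MonotoneOn (fun t => Real.exp (-(nu3 t) * Real.log x) / t)
        (Set.Icc (3000175332800 : ℝ) t₀) ∧
      AntitoneOn (fun t => Real.exp (-(nu3 t) * Real.log x) / t) (Set.Ici t₀) ∧
      (2 / (3 * 57.54) : ℝ) ^ ((3:ℝ)/5) * ((5:ℝ)/3) ^ ((1:ℝ)/5) *
          Real.log x ^ ((3:ℝ)/5) / Real.log (Real.log x) ^ ((1:ℝ)/5) ≤ Real.log t₀ ∧
      Real.log t₀ ≤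
        0.08228 * Real.log x ^ ((3:ℝ)/5) / Real.log (Real.log x) ^ ((1:ℝ)/5) := by
  have hxp : 0 < x := (exp_pos _).trans_le hx
  have hL : 2.8e10 ≤ log x := (le_log_iff_exp_le hxp).2 hx
  have hL0 : 0 < log x := lt_of_lt_of_le (by norm_num) hL
  obtain ⟨l, hldef⟩ : ∃ l, l = log (log x) := ⟨_, rfl⟩
  have hl : 24.055 ≤ l := by
    rw [hldef]; exact num_l.trans (log_le_log (by norm_num) hL)
  have hl0 : 0 < l := by linarith
  obtain ⟨a, ha⟩ : ∃ a, a = (3 / 5 * log (2 / (3 * 57.54)) + 1 / 5 * log (5 / 3))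
    + 3 / 5 * l - 1 / 5 * log l := ⟨_, rfl⟩
  obtain ⟨b, hb⟩ : ∃ b, b = log 0.08228 + 3 / 5 * l - 1 / 5 * log l := ⟨_, rfl⟩
  have hlog2 : log 2 < 0.7 := by linarith [log_two_lt_d9]
  have ha6 : 6 ≤ a := by
    have h1 : -(7 * log 2) ≤ log (2 / (3 * 57.54)) := by
      have h : log ((2:ℝ) ^ 7)⁻¹ ≤ log (2 / (3 * 57.54)) :=
        log_le_log (by norm_num) (by norm_num)
      rw [log_inv, log_pow] at h
      exact_mod_cast h
    have h2 : 0 ≤ log (5 / 3 : ℝ) := log_nonneg (by norm_num)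
    have h3 := log_le_sub_one_of_pos hl0
    linarith
  have hab : a ≤ b := by
    have h : log ((2 / (3 * 57.54)) ^ 3 * (5 / 3)) ≤ log (0.08228 ^ 5 : ℝ) :=
      log_le_log (by norm_num) (by norm_num)
    rw [log_mul (by norm_num) (by norm_num), log_pow, log_pow] at h
    push_cast at h
    linarith
  have hEa := lower_E l a hl (by linarith) ha
  have hEb := upper_E l hl
  rw [← hb] at hEb
  have hcont : ContinuousOn (auxE l) (Set.Icc a b) := by
    unfold auxE
    have h1 : ∀ w ∈ Set.Icc a b, w ≠ 0 := fun w hw => by have := hw.1; linarith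
    have h2 : ∀ w ∈ Set.Icc a b, 2 * w + 1 ≠ 0 := fun w hw => by have := hw.1; linarith
    have h3 : ContinuousOn (fun w : ℝ => log w) (Set.Icc a b) := continuousOn_id.log h1
    have h4 : ContinuousOn (fun w : ℝ => log (2 * w + 1)) (Set.Icc a b) :=
      ContinuousOn.log (by fun_prop) h2
    fun_prop
  obtain ⟨w, ⟨haw, hwb⟩, hE⟩ := intermediate_value_Icc' hab hcont ⟨hEb, hEa⟩
  have hH : log (3000175332800 : ℝ) ≤ 30 := by
    have h : log (3000175332800 : ℝ) ≤ log ((2:ℝ) ^ 42) := log_le_log (by norm_num) (by norm_num)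
    rw [log_pow] at h
    push_cast at h
    linarith
  have hH1 : 1 < log (3000175332800 : ℝ) := by
    rw [lt_log_iff_exp_lt (by norm_num)]
    linarith [exp_one_lt_d9]
  have hlogH : ∀ t : ℝ, 3000175332800 ≤ t → 1 < log t := fun t ht =>
    hH1.trans_le (log_le_log (by norm_num) ht)
  have hw6 : exp 5 ≤ exp w := exp_le_exp.2 (by linarith)
  have he5 : (30 : ℝ) ≤ exp 5 := by
    have : (2:ℝ) ^ 5 ≤ exp 1 ^ 5 := by gcongr; linarith [exp_one_gt_d9]
    rw [← exp_nat_mul] at this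
    norm_num at this
    linarith
  have hH0 : (3000175332800 : ℝ) ≤ exp (exp w) := by
    rw [← log_le_iff_le_exp (by norm_num)]
    linarith
  have hLexp : log x = exp l := by rw [hldef, exp_log hL0]
  have hll : log x ^ ((3:ℝ)/5) / l ^ ((1:ℝ)/5) = exp (3 / 5 * l - 1 / 5 * log l) := by
    rw [rpow_def_of_pos hL0, rpow_def_of_pos hl0, ← hldef, ← exp_sub]
    ring_nf
  refine ⟨exp (exp w), hH0, ?_, ?_, ?_, ?_⟩
  · intro s hs t ht hst
    have hs1 := hlogH s hs.1
    have ht1 := hlogH t ht.1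
    have hsp : 0 < s := lt_of_lt_of_le (by norm_num) hs.1
    have htp : 0 < t := lt_of_lt_of_le (by norm_num) ht.1
    simp only
    rw [fun_eq x s hL0 hsp hs1, fun_eq x t hL0 htp ht1, exp_le_exp, ← hldef]
    have hlt : log s ≤ log t := log_le_log hsp hst
    have hllt : log (log s) ≤ log (log t) := log_le_log (by linarith) hlt
    have htw : log (log t) ≤ w := by
      rw [log_le_iff_le_exp (by linarith), log_le_iff_le_exp htp]; exact ht.2
    exact auxPhi_mono l w hE ⟨log_pos hs1, hllt.trans htw⟩ ⟨log_pos ht1, htw⟩ hllt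
  · intro s hs t ht hst
    have hs1 := hlogH s (hH0.trans hs)
    have ht1 := hlogH t (hH0.trans ht)
    have hsp : 0 < s := lt_of_lt_of_le (by norm_num) (hH0.trans hs)
    have htp : 0 < t := lt_of_lt_of_le hsp hst
    simp only
    rw [fun_eq x s hL0 hsp hs1, fun_eq x t hL0 htp ht1, exp_le_exp, ← hldef]
    have hlt : log s ≤ log t := log_le_log hsp hst
    have hllt : log (log s) ≤ log (log t) := log_le_log (by linarith) hlt
    have hsw : w ≤ log (log s) := by
      rw [le_log_iff_exp_le (by linarith), le_log_iff_exp_le hsp]; exact hs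
    exact auxPhi_anti l w (by linarith) hE hsw (hsw.trans hllt) hllt
  · rw [log_exp, ← hldef, mul_div_assoc, hll, rpow_def_of_pos (by norm_num),
      rpow_def_of_pos (by norm_num), ← exp_add, ← exp_add, exp_le_exp]
    linarith
  · rw [log_exp, ← hldef, mul_div_assoc, hll]
    have : (0.08228 : ℝ) = exp (log 0.08228) := (exp_log (by norm_num)).symm
    rw [this, ← exp_add, exp_le_exp]
    linarith
end
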